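/- arXiv:1601.03100 — 4 statements merged into one kernel-verified Lean document; each statement's English description precedes it below -/
import Mathlib

section
/- Let (y_n) \subset \mathbb{Q}\setminus\{-1,1\} be an admissible solution of y_{n+1} + y_{n-1} = (a_n + b_n y_n + c_n y_n^2)/(1 - y_n^2), where a_n, b_n, c_n are rational functions of n with rational coefficients, c_n is not identically equal to 0, 2 or -2, and the right-hand side is of degree two in y_n for all sufficiently large n. Then there exists an integer r_0 such that for every F with 1 < F < 2 there is a constant D > 0 such that the summed logarithmic height h_r(y) = \sum_{n=r_0}^r h(y_n) satisfies h_r(y) \ge D\,F^r for all r \ge r_0. -/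
/-- The logarithmic height of a rational number `x = a/b` in lowest terms:
`h(x) = log max {|a|, |b|}`. -/
noncomputable def ratHeight (x : ℚ) : ℝ := Real.log (max (|x.num| : ℝ) (x.den : ℝ))

/-- Evaluation of a rational function of `n` (with rational coefficients) at `n : ℕ`. -/
noncomputable def evalRF (f : RatFunc ℚ) (n : ℕ) : ℚ :=
  RatFunc.eval (RingHom.id ℚ) (n : ℚ) f



structure IsPl (v : ℚ → ℝ) (κ : ℝ) : Prop where
  one_le : 1 ≤ κ
  zero : v 0 = 0
  pos : ∀ x, x ≠ 0 → 0 < v x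
  one : v 1 = 1
  neg : ∀ x, v (-x) = v x
  mul : ∀ x y, v (x * y) = v x * v y
  add : ∀ x y, v (x + y) ≤ κ * max (v x) (v y)

structure GoodPl (v : ℚ → ℝ) (κ Q : ℝ) (a b c : ℚ) : Prop where
  kQ : κ ≤ Q
  two : 1 ≤ Q * v 2
  a_le : v a ≤ Q
  b_le : v b ≤ Q
  c_le : v c ≤ Q
  c0 : 1 ≤ Q * v c
  c2 : 1 ≤ Q * v (c + 2)
  c2' : 1 ≤ Q * v (c - 2)
  s1 : 1 ≤ Q * v (a + b + c)
  s2 : 1 ≤ Q * v (a - b + c)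

theorem IsPl.nonneg {v κ} (h : IsPl v κ) (x : ℚ) : 0 ≤ v x := by
  by_cases hx : x = 0
  · rw [hx, h.zero]
  · exact (h.pos x hx).le

theorem IsPl.inv {v κ} (h : IsPl v κ) (x : ℚ) : v x⁻¹ = (v x)⁻¹ := by
  by_cases hx : x = 0
  · simp [hx, h.zero]
  · have := h.mul x x⁻¹
    rw [mul_inv_cancel₀ hx, h.one] at this
    exact (eq_inv_of_mul_eq_one_right this.symm)

/-- addition bound -/
theorem IsPl.add_le {v κ} (h : IsPl v κ) {Q t : ℝ} (hQ : κ ≤ Q) {x y : ℚ} (hx : v x ≤ t)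
    (hy : v y ≤ t) : v (x + y) ≤ Q * t := by
  have h1 := h.add x y
  have h2 : max (v x) (v y) ≤ t := max_le hx hy
  have h3 : 0 ≤ max (v x) (v y) := le_max_of_le_left (h.nonneg x)
  have := h.one_le
  calc v (x + y) ≤ κ * max (v x) (v y) := h1
    _ ≤ Q * t := mul_le_mul hQ h2 h3 (by linarith)

noncomputable def eN (v : ℚ → ℝ) (y : ℚ) : ℝ := max 1 (v (y - 1)⁻¹) * max 1 (v (y + 1)⁻¹)

/-- `θ` is a sign and `y` is far from `-θ`. -/
theorem eN_le {v κ Q a b c} (h : IsPl v κ) (g : GoodPl v κ Q a b c) (y : ℚ) :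
    ∃ θ : ℚ, (θ = 1 ∨ θ = -1) ∧ eN v y ≤ Q ^ 2 * max 1 (v (y - θ))⁻¹ := by
  have hk := h.one_le
  have hQ : 1 ≤ Q := hk.trans g.kQ
  have key : ∀ z : ℚ, 1 ≤ Q ^ 2 * v z → max 1 (v z⁻¹) ≤ Q ^ 2 := by
    intro z hz
    apply max_le (one_le_pow₀ hQ)
    rw [h.inv]
    have hz0 : 0 < v z := by
      by_contra hc
      have : v z = 0 := le_antisymm (not_lt.1 hc) (h.nonneg z)
      rw [this] at hz; norm_num at hz
    rw [inv_le_comm₀ hz0 (by positivity)]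
    rw [inv_le_iff_one_le_mul₀ (by positivity)]; linarith
  have h2 : v 2 ≤ Q * max (v (y+1)) (v (y-1)) := by
    have := h.add_le (t := max (v (y+1)) (v (y-1))) g.kQ (x := y + 1) (y := -(y-1))
      (le_max_left _ _) (by rw [h.neg]; exact le_max_right _ _)
    convert this using 2; ring
  have h3 : 1 ≤ Q ^ 2 * max (v (y+1)) (v (y-1)) := by
    have := g.two
    nlinarith
  rcases max_cases (v (y+1)) (v (y-1)) with ⟨e, _⟩ | ⟨e, _⟩
  · rw [e] at h3
    refine ⟨1, Or.inl rfl, ?_⟩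
    unfold eN
    rw [← h.inv, mul_comm]
    exact mul_le_mul_of_nonneg_right (key _ h3) (by positivity)
  · rw [e] at h3
    refine ⟨-1, Or.inr rfl, ?_⟩
    unfold eN
    rw [← h.inv, sub_neg_eq_add]
    exact mul_le_mul_of_nonneg_right (key _ h3) (by positivity)

theorem IsPl.sign {v κ} (h : IsPl v κ) {θ : ℚ} (hθ : θ = 1 ∨ θ = -1) : v θ = 1 := by
  rcases hθ with rfl | rfl
  · exact h.one
  · rw [h.neg, h.one]

theorem lemA {v κ Q a b c} (h : IsPl v κ) (g : GoodPl v κ Q a b c) (y y' y'' : ℚ)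
    (hy : y ≠ 1 ∧ y ≠ -1) (e : y' + y'' = (a + b * y + c * y ^ 2) / (1 - y ^ 2)) :
    eN v y ≤ Q ^ 8 * max 1 (max (v y') (v y'')) := by
  have hk := h.one_le
  have hQ : 1 ≤ Q := hk.trans g.kQ
  have hQ0 : 0 < Q := by linarith
  obtain ⟨θ, hθ, hN⟩ := eN_le h g y
  have hyθ : y - θ ≠ 0 := by
    rcases hθ with rfl | rfl
    · exact sub_ne_zero.2 hy.1
    · exact sub_ne_zero.2 hy.2
  have hθ2 : θ ^ 2 = 1 := by rcases hθ with rfl | rfl <;> norm_num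
  have hvθ := h.sign hθ
  have hnn := h.nonneg
  set d := v (y - θ) with hd
  have hd0 : 0 < d := h.pos _ hyθ
  have hM1 : 1 ≤ max 1 (max (v y') (v y'')) := le_max_left _ _
  have hMM : max (v y') (v y'') ≤ max 1 (max (v y') (v y'')) := le_max_right _ _
  by_cases hdQ : 1 ≤ Q ^ 6 * d
  · have : max 1 d⁻¹ ≤ Q ^ 6 := by
      apply max_le (one_le_pow₀ hQ)
      rw [inv_le_comm₀ hd0 (by positivity), inv_le_iff_one_le_mul₀ (by positivity)]; linarith
    calc eN v y ≤ Q ^ 2 * max 1 d⁻¹ := hN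
      _ ≤ Q ^ 2 * Q ^ 6 := by gcongr
      _ = Q ^ 8 * 1 := by ring
      _ ≤ _ := by gcongr
  · push Not at hdQ
    have hQ6 : 1 ≤ Q ^ 6 := one_le_pow₀ hQ
    have hd1 : d ≤ 1 := by nlinarith
    have hvy : v y ≤ Q := by
      have := h.add_le (t := 1) g.kQ (x := y - θ) (y := θ) hd1 hvθ.le
      simpa using this
    have hvs : v (y + θ) ≤ Q * Q := h.add_le (t := Q) g.kQ hvy (by rw [hvθ]; exact hQ)
    have hden : v (1 - y ^ 2) ≤ d * (Q * Q) := by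
      have : 1 - y ^ 2 = -((y - θ) * (y + θ)) := by linear_combination -hθ2
      rw [this, h.neg, h.mul]
      exact mul_le_mul_of_nonneg_left hvs hd0.le
    have hs : 1 ≤ Q * v (a + b * θ + c) := by
      rcases hθ with rfl | rfl
      · simpa using g.s1
      · have := g.s2
        rw [show a + b * -1 + c = a - b + c by ring]; exact this
    have hsec : v ((y - θ) * (b + c * (y + θ))) ≤ d * (Q * Q ^ 3) := by
      rw [h.mul]
      apply mul_le_mul_of_nonneg_left _ hd0.le
      apply h.add_le g.kQ
      · have := g.b_le
        have : Q ≤ Q ^ 3 := le_self_pow₀ hQ (by norm_num)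
        linarith [g.b_le]
      · rw [h.mul]
        calc v c * v (y + θ) ≤ Q * (Q * Q) := mul_le_mul g.c_le hvs (hnn _) hQ0.le
          _ = Q ^ 3 := by ring
    have hadd := h.add (a + b * y + c * y ^ 2) (-((y - θ) * (b + c * (y + θ))))
    rw [show a + b * y + c * y ^ 2 + -((y - θ) * (b + c * (y + θ))) = a + b * θ + c by
      linear_combination c * hθ2, h.neg] at hadd
    have hnum : 1 ≤ Q ^ 2 * v (a + b * y + c * y ^ 2) := by
      by_contra hcon
      push Not at hcon
      have h1 : Q * v (a + b * θ + c) ≤ Q * (Q * max (v (a + b * y + c * y ^ 2))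
          (v ((y - θ) * (b + c * (y + θ))))) := by
        gcongr
        refine hadd.trans (mul_le_mul_of_nonneg_right g.kQ ?_)
        exact le_max_of_le_left (hnn _)
      rcases max_cases (v (a + b * y + c * y ^ 2))
          (v ((y - θ) * (b + c * (y + θ)))) with ⟨e, _⟩ | ⟨e, _⟩
      · rw [e] at h1; nlinarith
      · rw [e] at h1
        have : Q * (Q * v ((y - θ) * (b + c * (y + θ)))) ≤ Q * (Q * (d * (Q * Q ^ 3))) := by
          gcongr
        nlinarith
    have hne : (1 - y ^ 2) ≠ 0 := by
      intro h0
      have : (1 - y) * (1 + y) = 0 := by linear_combination h0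
      rcases mul_eq_zero.1 this with h1 | h1
      · exact hy.1 (by linarith)
      · exact hy.2 (by linarith)
    have hprod : v (y' + y'') * v (1 - y ^ 2) = v (a + b * y + c * y ^ 2) := by
      rw [← h.mul, e, div_mul_cancel₀ _ hne]
    have hyy : v (y' + y'') ≤ Q * max 1 (max (v y') (v y'')) :=
      h.add_le g.kQ ((le_max_left _ _).trans hMM) ((le_max_right _ _).trans hMM)
    have hfin : 1 ≤ Q ^ 5 * max 1 (max (v y') (v y'')) * d := by
      calc 1 ≤ Q ^ 2 * (v (y' + y'') * v (1 - y ^ 2)) := by rw [hprod]; exact hnum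
        _ ≤ Q ^ 2 * ((Q * max 1 (max (v y') (v y''))) * (d * (Q * Q))) := by
            gcongr
            exact hnn _
        _ = _ := by ring
    have : max 1 d⁻¹ ≤ Q ^ 5 * max 1 (max (v y') (v y'')) := by
      apply max_le
      · have : 1 ≤ Q ^ 5 := one_le_pow₀ hQ
        nlinarith
      · rw [inv_le_iff_one_le_mul₀ hd0]; exact hfin
    calc eN v y ≤ Q ^ 2 * max 1 d⁻¹ := hN
      _ ≤ Q ^ 2 * (Q ^ 5 * max 1 (max (v y') (v y''))) := by gcongr
      _ = Q ^ 7 * max 1 (max (v y') (v y'')) := by ring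
      _ ≤ _ := by
        gcongr
        norm_num

theorem lemB {v κ Q a b c} (h : IsPl v κ) (g : GoodPl v κ Q a b c) (y y' y'' : ℚ)
    (hy : y ≠ 1 ∧ y ≠ -1) (e : y' + y'' = (a + b * y + c * y ^ 2) / (1 - y ^ 2))
    (h1 : eN v y' ≤ Q ^ 8 * max 1 (v y)) : eN v y' ≤ Q ^ 15 ∨ eN v y'' ≤ Q ^ 15 := by
  have hk := h.one_le
  have hQ : 1 ≤ Q := hk.trans g.kQ
  have hQ0 : 0 < Q := by linarith
  have hnn := h.nonneg
  by_contra hcon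
  push Not at hcon
  obtain ⟨hc1, hc2⟩ := hcon
  have hpow : ∀ n : ℕ, 1 ≤ Q ^ n := fun n => one_le_pow₀ hQ
  have near : ∀ z, Q ^ 15 < eN v z → ∃ θ : ℚ, (θ = 1 ∨ θ = -1) ∧ Q ^ 13 * v (z - θ) < 1 := by
    intro z hz
    obtain ⟨θ, hθ, hN⟩ := eN_le h g z
    refine ⟨θ, hθ, ?_⟩
    have h2 : Q ^ 2 * Q ^ 13 < Q ^ 2 * max 1 (v (z - θ))⁻¹ := by
      calc Q ^ 2 * Q ^ 13 = Q ^ 15 := by ring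
        _ < _ := hz.trans_le hN
    have h3 : Q ^ 13 < max 1 (v (z - θ))⁻¹ := lt_of_mul_lt_mul_left h2 (by positivity)
    rcases lt_max_iff.1 h3 with h4 | h4
    · exact absurd h4 (not_lt.2 (hpow 13))
    · rcases (hnn (z - θ)).eq_or_lt with h5 | h5
      · rw [← h5]; norm_num
      · rwa [lt_inv_comm₀ (by positivity) h5, ← one_div, lt_div_iff₀ (by positivity), mul_comm] at h4
  obtain ⟨θ₁, hθ₁, hd₁⟩ := near _ hc1
  obtain ⟨θ₂, hθ₂, hd₂⟩ := near _ hc2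
  have hY : Q ^ 7 < v y := by
    have : Q ^ 8 * Q ^ 7 < Q ^ 8 * max 1 (v y) := by
      calc Q ^ 8 * Q ^ 7 = Q ^ 15 := by ring
        _ < _ := hc1.trans_le h1
    have h3 := lt_of_mul_lt_mul_left this (by positivity)
    rcases lt_max_iff.1 h3 with h4 | h4
    · exact absurd h4 (not_lt.2 (hpow 7))
    · exact h4
  have hY1 : 1 ≤ v y := (hpow 7).trans hY.le
  have hY0 : 0 < v y := by linarith
  have hQY : Q < v y := (le_self_pow₀ hQ (by norm_num)).trans_lt hY
  have hne : (1 - y ^ 2) ≠ 0 := by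
    intro h0
    have : (1 - y) * (1 + y) = 0 := by linear_combination h0
    rcases mul_eq_zero.1 this with h1 | h1
    · exact hy.1 (by linarith)
    · exact hy.2 (by linarith)
  have hden : v y * v y ≤ Q * v (1 - y ^ 2) := by
    have h2 := h.add (1 - y ^ 2) (-1)
    rw [show 1 - y ^ 2 + -1 = -(y * y) by ring, h.neg, h.neg, h.mul, h.one] at h2
    have h3 : v y * v y ≤ Q * max (v (1 - y ^ 2)) 1 :=
      h2.trans (mul_le_mul_of_nonneg_right g.kQ (by positivity))
    rcases max_cases (v (1 - y ^ 2)) 1 with ⟨e, _⟩ | ⟨e, _⟩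
    · rwa [e] at h3
    · rw [e] at h3; nlinarith
  have hnum : v (a + c + b * y) ≤ Q * (Q * Q * v y) := by
    apply h.add_le g.kQ
    · have : v (a + c) ≤ Q * Q := h.add_le g.kQ g.a_le g.c_le
      nlinarith
    · rw [h.mul]
      have h5 : v b * v y ≤ Q * v y := mul_le_mul_of_nonneg_right g.b_le hY0.le
      have h6 : Q * v y ≤ Q * Q * v y := mul_le_mul_of_nonneg_right (by nlinarith) hY0.le
      linarith
  set w := (a + c + b * y) / (1 - y ^ 2) with hw
  have hwv : v w * v (1 - y ^ 2) = v (a + c + b * y) := by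
    rw [← h.mul, hw, div_mul_cancel₀ _ hne]
  have hwle : v w * v y ≤ Q ^ 4 := by
    have h2 : v w * (v y * v y) ≤ Q ^ 4 * v y := by
      calc v w * (v y * v y) ≤ v w * (Q * v (1 - y ^ 2)) := by
            gcongr
            exact hnn _
        _ = Q * v (a + c + b * y) := by rw [← hwv]; ring
        _ ≤ Q * (Q * (Q * Q * v y)) := by gcongr
        _ = _ := by ring
    have : (v w * v y) * v y ≤ Q ^ 4 * v y := by linarith
    exact le_of_mul_le_mul_right this hY0
  have hw3 : Q ^ 3 * v w < 1 := by
    rcases (hnn w).eq_or_lt with h5 | h5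
    · rw [← h5]; norm_num
    · have : v w * Q ^ 7 < Q ^ 4 := (mul_lt_mul_of_pos_left hY h5).trans_le hwle
      have : Q ^ 4 * (Q ^ 3 * v w) < Q ^ 4 * 1 := by linarith
      exact lt_of_mul_lt_mul_left this (by positivity)
  have hid : c + (θ₁ + θ₂) = w + (-(y' - θ₁) + -(y'' - θ₂)) := by
    have : w = y' + y'' + c := by
      rw [e, hw]; field_simp; ring
    rw [this]; ring
  have hs : 1 ≤ Q * v (c + (θ₁ + θ₂)) := by
    rcases hθ₁ with rfl | rfl <;> rcases hθ₂ with rfl | rfl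
    · convert g.c2 using 3; norm_num
    · convert g.c0 using 3; norm_num
    · convert g.c0 using 3; norm_num
    · convert g.c2' using 3; ring
  set t := max (v w) (max (v (y' - θ₁)) (v (y'' - θ₂))) with ht
  have hle : v (c + (θ₁ + θ₂)) ≤ Q * (Q * t) := by
    rw [hid]
    apply h.add_le g.kQ
    · have : v w ≤ t := le_max_left _ _
      have := hnn w
      nlinarith
    · apply h.add_le g.kQ
      · rw [h.neg]; exact (le_max_left _ _).trans (le_max_right _ _)
      · rw [h.neg]; exact (le_max_right _ _).trans (le_max_right _ _)
  have ht3 : Q ^ 3 * t < 1 := by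
    have h313 : ∀ u : ℚ, Q ^ 13 * v u < 1 → Q ^ 3 * v u < 1 := by
      intro u hu
      refine lt_of_le_of_lt ?_ hu
      apply mul_le_mul_of_nonneg_right _ (hnn u)
      exact pow_le_pow_right₀ hQ (by norm_num)
    rw [ht, mul_max_of_nonneg _ _ (by positivity), mul_max_of_nonneg _ _ (by positivity)]
    exact max_lt hw3 (max_lt (h313 _ hd₁) (h313 _ hd₂))
  have : Q * v (c + (θ₁ + θ₂)) ≤ Q * (Q * (Q * t)) := by gcongr
  nlinarith

noncomputable def lam (v : ℚ → ℝ) (x : ℚ) : ℝ := Real.log (max 1 (v x))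

noncomputable def errL (v : ℚ → ℝ) (κ : ℝ) (a b c : ℚ) : ℝ :=
  Real.log κ + lam v 2⁻¹ + lam v a + lam v b + lam v c + lam v c⁻¹ + lam v (c + 2)⁻¹
    + lam v (c - 2)⁻¹ + lam v (a + b + c)⁻¹ + lam v (a - b + c)⁻¹

theorem lam_nonneg (v : ℚ → ℝ) (x : ℚ) : 0 ≤ lam v x := Real.log_nonneg (le_max_left _ _)

theorem le_of_lam {v : ℚ → ℝ} {x : ℚ} {E : ℝ} (h : lam v x ≤ E) : v x ≤ Real.exp E := by
  have h1 : 0 < max 1 (v x) := by positivity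
  have := (Real.log_le_iff_le_exp h1).1 h
  exact (le_max_right _ _).trans this

theorem errL_nonneg {v κ} (h : IsPl v κ) (a b c : ℚ) : 0 ≤ errL v κ a b c := by
  unfold errL
  have := Real.log_nonneg h.one_le
  have := lam_nonneg v
  have h2 := this 2⁻¹
  have := this a
  have := lam_nonneg v b
  have := lam_nonneg v c
  have := lam_nonneg v c⁻¹
  have := lam_nonneg v (c+2)⁻¹
  have := lam_nonneg v (c-2)⁻¹
  have := lam_nonneg v (a+b+c)⁻¹
  have := lam_nonneg v (a-b+c)⁻¹
  positivity

structure NZ (a b c : ℚ) : Prop where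
  c0 : c ≠ 0
  c2 : c + 2 ≠ 0
  c2' : c - 2 ≠ 0
  s1 : a + b + c ≠ 0
  s2 : a - b + c ≠ 0

theorem good_of {v κ} (h : IsPl v κ) {a b c : ℚ} (nz : NZ a b c) {E : ℝ}
    (hE : errL v κ a b c ≤ E) : GoodPl v κ (Real.exp E) a b c := by
  unfold errL at hE
  have h1 := Real.log_nonneg h.one_le
  have h2 := lam_nonneg v 2⁻¹
  have h3 := lam_nonneg v a
  have h4 := lam_nonneg v b
  have h5 := lam_nonneg v c
  have h6 := lam_nonneg v c⁻¹
  have h7 := lam_nonneg v (c+2)⁻¹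
  have h8 := lam_nonneg v (c-2)⁻¹
  have h9 := lam_nonneg v (a+b+c)⁻¹
  have h10 := lam_nonneg v (a-b+c)⁻¹
  have key : ∀ x : ℚ, x ≠ 0 → lam v x⁻¹ ≤ E → 1 ≤ Real.exp E * v x := by
    intro x hx hl
    have := le_of_lam hl
    rw [h.inv] at this
    have h0 := h.pos x hx
    rwa [inv_le_iff_one_le_mul₀ h0] at this
  refine ⟨?_, key _ (by norm_num) (by linarith), le_of_lam (by linarith), le_of_lam (by linarith),
    le_of_lam (by linarith), key _ nz.c0 (by linarith), key _ nz.c2 (by linarith),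
    key _ nz.c2' (by linarith), key _ nz.s1 (by linarith), key _ nz.s2 (by linarith)⟩
  rw [← Real.log_le_iff_le_exp (by linarith [h.one_le])]
  linarith

noncomputable def lN (v : ℚ → ℝ) (y : ℚ) : ℝ := lam v (y - 1)⁻¹ + lam v (y + 1)⁻¹

theorem lN_eq (v : ℚ → ℝ) (y : ℚ) : lN v y = Real.log (eN v y) := by
  unfold lN eN lam
  rw [Real.log_mul (by positivity) (by positivity)]

theorem eN_pos (v : ℚ → ℝ) (y : ℚ) : 0 < eN v y := by unfold eN; positivity

theorem lN_nonneg (v : ℚ → ℝ) (y : ℚ) : 0 ≤ lN v y := add_nonneg (lam_nonneg _ _) (lam_nonneg _ _)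

theorem lemA' {v κ a b c} (h : IsPl v κ) (nz : NZ a b c) {E : ℝ} (hE : errL v κ a b c ≤ E)
    (y y' y'' : ℚ) (hy : y ≠ 1 ∧ y ≠ -1)
    (e : y' + y'' = (a + b * y + c * y ^ 2) / (1 - y ^ 2)) (hle : v y'' ≤ v y') :
    lN v y ≤ lam v y' + 8 * E := by
  have g := good_of h nz hE
  have := lemA h g y y' y'' hy e
  rw [max_eq_left hle] at this
  have h2 := Real.log_le_log (eN_pos v y) this
  rw [Real.log_mul (by positivity) (by positivity), ← Real.exp_nat_mul, Real.log_exp] at h2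
  rw [lN_eq]; unfold lam
  push_cast at h2
  linarith

theorem lemB' {v κ a b c} (h : IsPl v κ) (nz : NZ a b c) {E : ℝ} (hE : errL v κ a b c ≤ E)
    (y y' y'' : ℚ) (hy : y ≠ 1 ∧ y ≠ -1)
    (e : y' + y'' = (a + b * y + c * y ^ 2) / (1 - y ^ 2)) (hle : lN v y' ≤ lam v y + 8 * E)
    (hle' : lN v y'' ≤ lam v y + 8 * E) :
    lN v y' + lN v y'' ≤ lam v y + 23 * E := by
  have g := good_of h nz hE
  have h1 : eN v y' ≤ Real.exp E ^ 8 * max 1 (v y) := by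
    rw [← Real.log_le_log_iff (eN_pos v y') (by positivity),
      Real.log_mul (by positivity) (by positivity), ← Real.exp_nat_mul, Real.log_exp, ← lN_eq]
    unfold lam at hle
    push_cast
    linarith
  have cv : ∀ z, eN v z ≤ Real.exp E ^ 15 → lN v z ≤ 15 * E := by
    intro z hz
    have := Real.log_le_log (eN_pos v z) hz
    rw [← Real.exp_nat_mul, Real.log_exp] at this
    rw [lN_eq]; push_cast at this; exact this
  rcases lemB h g y y' y'' hy e h1 with h2 | h2
  · linarith [cv _ h2]
  · linarith [cv _ h2]

/-- Local summed inequality at a single place. Index `i` of coefficients belongs to `z (i+1)`. -/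
theorem local_sum {v κ} (h : IsPl v κ) (z a b c : ℕ → ℚ)
    (nz : ∀ i, NZ (a i) (b i) (c i)) (hz : ∀ i, z i ≠ 1 ∧ z i ≠ -1)
    (e : ∀ i, z (i + 2) + z i =
      (a i + b i * z (i + 1) + c i * z (i + 1) ^ 2) / (1 - z (i + 1) ^ 2)) (k : ℕ) :
    ∑ i ∈ Finset.range k, lN v (z (i + 3)) ≤
      ∑ i ∈ Finset.range (k + 2), lam v (z (i + 2)) +
        69 * ∑ i ∈ Finset.range (k + 2), errL v κ (a i) (b i) (c i) := by
  classical
  set E : ℕ → ℝ := fun i => errL v κ (a i) (b i) (c i) with hEdef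
  have hE0 : ∀ i, 0 ≤ E i := fun i => errL_nonneg h _ _ _
  -- R i, L i are attached to z (i+1)
  let R : ℕ → ℝ := fun i => if v (z i) ≤ v (z (i + 2)) then lN v (z (i + 1)) else 0
  let L : ℕ → ℝ := fun i => if v (z i) ≤ v (z (i + 2)) then 0 else lN v (z (i + 1))
  have hRL : ∀ i, lN v (z (i + 1)) = R i + L i := by
    intro i; simp only [R, L]; split_ifs <;> simp
  have hR : ∀ i E', E i ≤ E' → R i ≤ lam v (z (i + 2)) + 8 * E' := by
    intro i E' hE'
    simp only [R]
    split_ifs with hc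
    · exact lemA' h (nz i) hE' _ _ _ (hz _) (e i) hc
    · have := lam_nonneg v (z (i + 2))
      have := hE0 i
      linarith
  have hL : ∀ i E', E i ≤ E' → L i ≤ lam v (z i) + 8 * E' := by
    intro i E' hE'
    simp only [L]
    split_ifs with hc
    · have := lam_nonneg v (z i)
      have := hE0 i
      linarith
    · exact lemA' h (nz i) hE' _ _ _ (hz _) (by rw [add_comm]; exact e i) (not_le.1 hc).le
  have hstep : ∀ i, L (i + 2) + R i ≤ lam v (z (i + 2)) + 23 * (E i + E (i + 1) + E (i + 2)) := by
    intro i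
    have e0 := hE0 i
    have e1 := hE0 (i + 1)
    have e2 := hE0 (i + 2)
    have hr := hR i (E i + E (i + 1) + E (i + 2)) (by linarith)
    have hl := hL (i + 2) (E i + E (i + 1) + E (i + 2)) (by linarith)
    have hl0 := lN_nonneg v (z (i + 2 + 1))
    have hr0 := lN_nonneg v (z (i + 1))
    by_cases c1 : v (z i) ≤ v (z (i + 2))
    · by_cases c2 : v (z (i + 2)) ≤ v (z (i + 2 + 2))
      · have : L (i + 2) = 0 := by simp only [L]; rw [if_pos c2]
        rw [this]; linarith
      · have h1 : L (i + 2) = lN v (z (i + 3)) := by simp only [L]; rw [if_neg c2]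
        have h2 : R i = lN v (z (i + 1)) := by simp only [R]; rw [if_pos c1]
        rw [h1] at hl ⊢
        rw [h2] at hr ⊢
        exact lemB' h (nz (i + 1)) (E := E i + E (i + 1) + E (i + 2))
          (by simp only [hEdef] at *; linarith) (z (i + 2)) _ _ (hz _) (e (i + 1)) hl hr
    · have : R i = 0 := by simp only [R]; rw [if_neg c1]
      rw [this]; linarith
  have hR0 : ∀ i, 0 ≤ R i := by
    intro i; simp only [R]; split_ifs
    · exact lN_nonneg _ _
    · exact le_rfl
  have hind : ∀ k, ∑ i ∈ Finset.range k, lN v (z (i + 3)) ≤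
      ∑ i ∈ Finset.range k, lam v (z (i + 2)) +
        23 * ∑ i ∈ Finset.range k, (E i + E (i + 1) + E (i + 2)) + R k + R (k + 1) := by
    intro k
    induction k with
    | zero => simp; linarith [hR0 0, hR0 1]
    | succ k ih =>
      rw [Finset.sum_range_succ, Finset.sum_range_succ, Finset.sum_range_succ, mul_add]
      have := hstep k
      have := hRL (k + 2)
      simp only [show k + 2 + 1 = k + 3 from rfl, show k + 1 + 1 = k + 2 from rfl] at *
      linarith
  have hEs : ∑ i ∈ Finset.range k, (E i + E (i + 1) + E (i + 2)) + E k + E (k + 1)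
      ≤ 3 * ∑ i ∈ Finset.range (k + 2), E i := by
    have : ∀ k, ∑ i ∈ Finset.range k, (E i + E (i + 1) + E (i + 2)) + E k + E (k + 1) + E (k + 1)
      ≤ 3 * ∑ i ∈ Finset.range (k + 2), E i := by
      intro k
      induction k with
      | zero => simp [Finset.sum_range_succ]; linarith [hE0 0, hE0 1]
      | succ k ih =>
        rw [Finset.sum_range_succ, Finset.sum_range_succ _ (k + 1 + 1), mul_add]
        simp only [show k + 1 + 1 = k + 2 from rfl] at *
        linarith [hE0 k]
    linarith [this k, hE0 (k + 1)]
  have := hind k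
  have h1 := hR k _ le_rfl
  have h2 := hR (k + 1) _ le_rfl
  rw [Finset.sum_range_succ _ (k + 1), Finset.sum_range_succ _ k]
  simp only [show k + 1 + 2 = k + 3 from rfl] at *
  linarith [hE0 k, hE0 (k + 1)]

noncomputable def vinf (x : ℚ) : ℝ := |(x : ℝ)|
noncomputable def vp (p : ℕ) (x : ℚ) : ℝ := (padicNorm p x : ℝ)

theorem isPl_inf : IsPl vinf 2 where
  one_le := by norm_num
  zero := by simp [vinf]
  pos := by intro x hx; simp [vinf, hx]
  one := by simp [vinf]
  neg := by intro x; simp [vinf]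
  mul := by intro x y; simp [vinf, abs_mul]
  add := by
    intro x y
    simp only [vinf]; push_cast
    have := abs_add_le (x : ℝ) (y : ℝ)
    have := le_max_left |(x : ℝ)| |(y : ℝ)|
    have := le_max_right |(x : ℝ)| |(y : ℝ)|
    linarith

theorem isPl_p {p : ℕ} (hp : p.Prime) : IsPl (vp p) 1 := by
  have := Fact.mk hp
  exact
  { one_le := le_rfl
    zero := by simp [vp]
    pos := by
      intro x hx
      have := padicNorm.nonneg (p := p) x
      have h2 := padicNorm.nonzero (p := p) hx
      unfold vp
      exact_mod_cast lt_of_le_of_ne this h2.symm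
    one := by simp [vp]
    neg := by intro x; simp [vp]
    mul := by intro x y; simp [vp]
    add := by
      intro x y
      simp only [vp, one_mul]
      exact_mod_cast padicNorm.nonarchimedean (p := p) }

theorem lam_vp {p : ℕ} (hp : p.Prime) (x : ℚ) :
    lam (vp p) x = Real.log ((p ^ padicValNat p x.den : ℕ) : ℝ) := by
  have := Fact.mk hp
  unfold lam
  congr 1
  have hx : vp p x = vp p x.num / vp p x.den := by
    unfold vp
    rw [← Rat.cast_div, ← padicNorm.div, Rat.num_div_den]
  by_cases hd : p ∣ x.den
  · have hn : ¬ (p : ℤ) ∣ x.num := by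
      intro h
      have h1 : p ∣ x.num.natAbs := Int.natCast_dvd.1 h
      have := Nat.dvd_gcd h1 hd
      rw [x.reduced] at this
      exact hp.one_lt.ne' (Nat.dvd_one.1 this)
    have h1 : vp p x.num = 1 := by
      unfold vp; rw [(padicNorm.int_eq_one_iff _).2 hn]; simp
    have h2 : vp p x.den = ((p : ℝ) ^ padicValNat p x.den)⁻¹ := by
      unfold vp
      rw [padicNorm.eq_zpow_of_nonzero (by exact_mod_cast x.den_nz)]
      simp
    rw [hx, h1, h2]
    push_cast
    rw [one_div, inv_inv]
    exact max_eq_right (one_le_pow₀ (by exact_mod_cast hp.one_lt.le))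
  · have h2 : vp p x.den = 1 := by
      unfold vp; rw [(padicNorm.nat_eq_one_iff _).2 hd]; simp
    have h3 : vp p x.num ≤ 1 := by
      unfold vp; exact_mod_cast padicNorm.of_int (p := p) x.num
    rw [hx, h2, div_one, max_eq_left h3, padicValNat.eq_zero_of_not_dvd hd]
    simp

noncomputable def gs (B : ℕ) (x : ℚ) : ℝ :=
  lam vinf x + ∑ p ∈ Finset.range B with p.Prime, lam (vp p) x

theorem gs_eq {B : ℕ} {x : ℚ} (h : x.den < B) : gs B x = ratHeight x := by
  unfold gs
  have h1 : ∑ p ∈ Finset.range B with p.Prime, lam (vp p) x = Real.log x.den := by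
    conv_rhs => rw [← Nat.prod_pow_prime_padicValNat x.den x.den_nz B h]
    rw [Nat.cast_prod, Real.log_prod]
    · apply Finset.sum_congr rfl
      intro p hp
      exact lam_vp (Finset.mem_filter.1 hp).2 x
    · intro p hp
      have := (Finset.mem_filter.1 hp).2.pos
      positivity
  rw [h1]
  have hd : (0 : ℝ) < x.den := by exact_mod_cast x.den_pos
  unfold lam ratHeight vinf
  rw [← Real.log_mul (by positivity) hd.ne']
  congr 1
  rw [max_mul_of_nonneg _ _ hd.le, max_comm, one_mul]
  congr 1
  have hx : (x : ℝ) = (x.num : ℝ) / (x.den : ℝ) := Rat.cast_def x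
  rw [hx, abs_div, abs_of_pos hd, div_mul_cancel₀ _ hd.ne']

theorem gs_le (B : ℕ) (x : ℚ) : gs B x ≤ ratHeight x := by
  rw [← gs_eq (lt_of_lt_of_le (Nat.lt_succ_self x.den) (le_max_right B (x.den + 1)))]
  unfold gs
  apply add_le_add le_rfl
  apply Finset.sum_le_sum_of_subset_of_nonneg
  · intro p hp
    simp only [Finset.mem_filter, Finset.mem_range] at *
    exact ⟨hp.1.trans_le (le_max_left _ _), hp.2⟩
  · intros; exact lam_nonneg _ _

theorem ratHeight_nonneg (x : ℚ) : 0 ≤ ratHeight x := by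
  apply Real.log_nonneg
  apply le_max_of_le_right
  exact_mod_cast x.den_pos

theorem ratHeight_inv {x : ℚ} (hx : x ≠ 0) : ratHeight x⁻¹ = ratHeight x := by
  unfold ratHeight
  have hn : x.num ≠ 0 := Rat.num_ne_zero.2 hx
  have h1 : (|((x⁻¹).num : ℝ)|) = x.den := by
    rw [Rat.num_inv]
    push_cast
    rw [abs_mul, Nat.abs_cast]
    have : |((x.num.sign : ℤ) : ℝ)| = 1 := by
      rcases lt_or_gt_of_ne hn with h | h
      · rw [Int.sign_eq_neg_one_of_neg h]; simp
      · rw [Int.sign_eq_one_of_pos h]; simp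
    rw [this, one_mul]
  have h2 : ((x⁻¹).den : ℝ) = |(x.num : ℝ)| := by
    rw [Rat.den_inv, if_neg hn]
    simp
  rw [h1, h2, max_comm]

theorem lam_add {v κ} (h : IsPl v κ) (x y : ℚ) :
    lam v (x + y) ≤ lam v x + lam v y + Real.log κ := by
  have hk := h.one_le
  unfold lam
  rw [← Real.log_mul (by positivity) (by positivity), ← Real.log_mul (by positivity) (by positivity)]
  apply Real.log_le_log (by positivity)
  have hx1 : 1 ≤ max 1 (v x) := le_max_left _ _
  have hy1 : 1 ≤ max 1 (v y) := le_max_left _ _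
  have hx : v x ≤ max 1 (v x) := le_max_right _ _
  have hy : v y ≤ max 1 (v y) := le_max_right _ _
  have h1 : 1 ≤ max 1 (v x) * max 1 (v y) := one_le_mul_of_one_le_of_one_le hx1 hy1
  apply max_le
  · exact one_le_mul_of_one_le_of_one_le h1 hk
  · rw [mul_comm]
    exact h.add_le le_rfl (by nlinarith) (by nlinarith)

theorem ratHeight_add (x y : ℚ) : ratHeight (x + y) ≤ ratHeight x + ratHeight y + Real.log 2 := by
  rw [← gs_eq (Nat.lt_succ_self (x + y).den)]
  have h1 := gs_le ((x + y).den + 1) x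
  have h2 := gs_le ((x + y).den + 1) y
  refine le_trans ?_ (add_le_add (add_le_add h1 h2) le_rfl)
  unfold gs
  have h3 := lam_add isPl_inf x y
  have h4 : ∑ p ∈ Finset.range ((x + y).den + 1) with p.Prime, lam (vp p) (x + y) ≤
      ∑ p ∈ Finset.range ((x + y).den + 1) with p.Prime, (lam (vp p) x + lam (vp p) y) := by
    apply Finset.sum_le_sum
    intro p hp
    have := lam_add (isPl_p (Finset.mem_filter.1 hp).2) x y
    simpa using this
  rw [Finset.sum_add_distrib] at h4
  linarith

theorem ratHeight_neg (x : ℚ) : ratHeight (-x) = ratHeight x := by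
  unfold ratHeight; simp

theorem ratHeight_one : ratHeight 1 = 0 := by simp [ratHeight]
theorem ratHeight_two : ratHeight 2 = Real.log 2 := by
  simp [ratHeight]

theorem log_two_le : Real.log 2 ≤ 1 := by
  have := Real.log_two_lt_d9; linarith

noncomputable def errG (a b c : ℚ) : ℝ :=
  Real.log 2 + ratHeight 2⁻¹ + ratHeight a + ratHeight b + ratHeight c + ratHeight c⁻¹
    + ratHeight (c + 2)⁻¹ + ratHeight (c - 2)⁻¹ + ratHeight (a + b + c)⁻¹
    + ratHeight (a - b + c)⁻¹

theorem errG_le {a b c : ℚ} (nz : NZ a b c) :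
    errG a b c ≤ 30 * max 1 (max (ratHeight a) (max (ratHeight b) (ratHeight c))) := by
  unfold errG
  rw [ratHeight_inv nz.c0, ratHeight_inv nz.c2, ratHeight_inv nz.c2', ratHeight_inv nz.s1,
    ratHeight_inv nz.s2, ratHeight_inv (by norm_num : (2 : ℚ) ≠ 0), ratHeight_two]
  set M := max 1 (max (ratHeight a) (max (ratHeight b) (ratHeight c)))
  have h1 : 1 ≤ M := le_max_left _ _
  have ha : ratHeight a ≤ M := (le_max_left _ _).trans (le_max_right _ _)
  have hb : ratHeight b ≤ M :=
    (le_max_left _ _).trans ((le_max_right _ _).trans (le_max_right _ _))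
  have hc : ratHeight c ≤ M :=
    (le_max_right _ _).trans ((le_max_right _ _).trans (le_max_right _ _))
  have e1 := ratHeight_add c 2
  have e2 := ratHeight_add c (-2)
  rw [← sub_eq_add_neg, ratHeight_neg] at e2
  rw [ratHeight_two] at e1 e2
  have e3 := ratHeight_add (a + b) c
  have e4 := ratHeight_add a b
  have e5 := ratHeight_add (a - b) c
  have e6 := ratHeight_add a (-b)
  rw [← sub_eq_add_neg, ratHeight_neg] at e6
  linarith [log_two_le]

theorem ratHeight_shift {y : ℚ} (hy : y ≠ 1 ∧ y ≠ -1) :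
    2 * ratHeight y ≤ ratHeight (y - 1)⁻¹ + ratHeight (y + 1)⁻¹ + 2 := by
  rw [ratHeight_inv (sub_ne_zero.2 hy.1), ratHeight_inv (by
    intro h; exact hy.2 (by linarith))]
  have h1 := ratHeight_add (y - 1) 1
  have h2 := ratHeight_add (y + 1) (-1)
  rw [ratHeight_neg] at h2
  rw [ratHeight_one] at h1 h2
  rw [sub_add_cancel] at h1
  rw [add_neg_cancel_right] at h2
  linarith [log_two_le]

theorem global_sum (z a b c : ℕ → ℚ)
    (nz : ∀ i, NZ (a i) (b i) (c i)) (hz : ∀ i, z i ≠ 1 ∧ z i ≠ -1)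
    (e : ∀ i, z (i + 2) + z i =
      (a i + b i * z (i + 1) + c i * z (i + 1) ^ 2) / (1 - z (i + 1) ^ 2)) (k : ℕ) :
    2 * ∑ i ∈ Finset.range k, ratHeight (z (i + 3)) ≤
      ∑ i ∈ Finset.range (k + 2), ratHeight (z (i + 2)) +
        2072 * ∑ i ∈ Finset.range (k + 2),
          max 1 (max (ratHeight (a i)) (max (ratHeight (b i)) (ratHeight (c i)))) := by
  obtain ⟨B, hB⟩ : ∃ B : ℕ, ∀ i ∈ Finset.range k, (z (i + 3) - 1)⁻¹.den < B ∧
      (z (i + 3) + 1)⁻¹.den < B := by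
    refine ⟨∑ i ∈ Finset.range k, ((z (i + 3) - 1)⁻¹.den + (z (i + 3) + 1)⁻¹.den) + 1, ?_⟩
    intro i hi
    have := Finset.single_le_sum
      (f := fun i => (z (i + 3) - 1)⁻¹.den + (z (i + 3) + 1)⁻¹.den) (fun _ _ => Nat.zero_le _) hi
    omega
  have hinf := local_sum isPl_inf z a b c nz hz e k
  have hp : ∀ p ∈ (Finset.range B).filter Nat.Prime, _ := fun p hp =>
    local_sum (isPl_p (Finset.mem_filter.1 hp).2) z a b c nz hz e k
  have hps := Finset.sum_le_sum hp
  rw [Finset.sum_add_distrib, ← Finset.mul_sum] at hps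
  rw [Finset.sum_comm (f := fun p i => lN (vp p) (z (i + 3))),
    Finset.sum_comm (f := fun p i => lam (vp p) (z (i + 2))),
    Finset.sum_comm (f := fun p i => errL (vp p) 1 (a i) (b i) (c i))] at hps
  have hL : ∑ i ∈ Finset.range k, (2 * ratHeight (z (i + 3)) - 2) ≤
      ∑ i ∈ Finset.range k, (lN vinf (z (i + 3)) +
        ∑ p ∈ Finset.range B with p.Prime, lN (vp p) (z (i + 3))) := by
    apply Finset.sum_le_sum
    intro i hi
    have h1 := gs_eq (hB i hi).1
    have h2 := gs_eq (hB i hi).2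
    have h3 := ratHeight_shift (hz (i + 3))
    unfold gs at h1 h2
    unfold lN
    rw [Finset.sum_add_distrib]
    linarith
  have hM : ∑ i ∈ Finset.range (k + 2), (lam vinf (z (i + 2)) +
        ∑ p ∈ Finset.range B with p.Prime, lam (vp p) (z (i + 2))) ≤
      ∑ i ∈ Finset.range (k + 2), ratHeight (z (i + 2)) :=
    Finset.sum_le_sum fun i _ => gs_le B _
  have hE : ∑ i ∈ Finset.range (k + 2), (errL vinf 2 (a i) (b i) (c i) +
        ∑ p ∈ Finset.range B with p.Prime, errL (vp p) 1 (a i) (b i) (c i)) ≤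
      ∑ i ∈ Finset.range (k + 2), 30 *
        max 1 (max (ratHeight (a i)) (max (ratHeight (b i)) (ratHeight (c i)))) := by
    apply Finset.sum_le_sum
    intro i _
    refine le_trans ?_ (errG_le (nz i))
    unfold errL errG
    simp only [Finset.sum_add_distrib, Real.log_one, Finset.sum_const_zero]
    have h1 := gs_le B 2⁻¹
    have h2 := gs_le B (a i)
    have h3 := gs_le B (b i)
    have h4 := gs_le B (c i)
    have h5 := gs_le B (c i)⁻¹
    have h6 := gs_le B (c i + 2)⁻¹
    have h7 := gs_le B (c i - 2)⁻¹
    have h8 := gs_le B (a i + b i + c i)⁻¹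
    have h9 := gs_le B (a i - b i + c i)⁻¹
    unfold gs at h1 h2 h3 h4 h5 h6 h7 h8 h9
    linarith
  have hk : (k : ℝ) ≤ ∑ i ∈ Finset.range (k + 2),
          max 1 (max (ratHeight (a i)) (max (ratHeight (b i)) (ratHeight (c i)))) := by
    calc (k : ℝ) ≤ ∑ i ∈ Finset.range (k + 2), (1 : ℝ) := by simp
      _ ≤ _ := Finset.sum_le_sum fun i _ => le_max_left _ _
  rw [Finset.sum_add_distrib] at hL hM hE
  rw [Finset.sum_sub_distrib, ← Finset.mul_sum] at hL
  rw [← Finset.mul_sum] at hE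
  simp only [Finset.sum_const, Finset.card_range, nsmul_eq_mul] at hL
  linarith

open Filter in
theorem poly_eventually {p : Polynomial ℚ} (hp : p ≠ 0) :
    ∀ᶠ n : ℕ in atTop, p.eval (n : ℚ) ≠ 0 := by
  have hfin : Set.Finite {n : ℕ | p.eval (n : ℚ) = 0} := by
    have : Set.Finite {x : ℚ | p.IsRoot x} := Polynomial.finite_setOfPred_isRoot hp
    exact this.preimage (fun a _ b _ h => by exact_mod_cast h)
  have := hfin.compl_mem_cofinite
  rw [Nat.cofinite_eq_atTop] at this
  exact this

open Filter in
theorem evalRF_ne {f : RatFunc ℚ} (hf : f ≠ 0) : ∀ᶠ n : ℕ in atTop, evalRF f n ≠ 0 := by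
  filter_upwards [poly_eventually (RatFunc.num_ne_zero hf), poly_eventually f.denom_ne_zero]
    with n h1 h2
  unfold evalRF RatFunc.eval
  exact div_ne_zero h1 h2

open Filter in
theorem evalRF_add (f g : RatFunc ℚ) :
    ∀ᶠ n : ℕ in atTop, evalRF (f + g) n = evalRF f n + evalRF g n := by
  filter_upwards [poly_eventually f.denom_ne_zero, poly_eventually g.denom_ne_zero] with n h1 h2
  exact RatFunc.eval_add _ _ h1 h2

theorem evalRF_C (q : ℚ) (n : ℕ) : evalRF (RatFunc.C q) n = q := by
  unfold evalRF
  rw [RatFunc.eval_C, RingHom.id_apply]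

open Filter in
theorem evalRF_neg (f : RatFunc ℚ) :
    ∀ᶠ n : ℕ in atTop, evalRF (-f) n = -evalRF f n := by
  filter_upwards [evalRF_add f (-f)] with n h
  rw [add_neg_cancel] at h
  have h0 : evalRF 0 n = 0 := by simp [evalRF]
  linarith

open Filter in
theorem eventually_NZ {a b c : RatFunc ℚ}
    (hc0 : c ≠ 0) (hc2 : c ≠ RatFunc.C 2) (hc2' : c ≠ RatFunc.C (-2))
    (hcop : IsCoprime
      (Polynomial.C a + Polynomial.C b * Polynomial.X + Polynomial.C c * Polynomial.X ^ 2)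
      (1 - Polynomial.X ^ 2 : Polynomial (RatFunc ℚ))) :
    ∀ᶠ n : ℕ in atTop, NZ (evalRF a n) (evalRF b n) (evalRF c n) := by
  have h1 : a + b + c ≠ 0 := by
    have := hcop.map (Polynomial.evalRingHom (1 : RatFunc ℚ))
    simp only [Polynomial.coe_evalRingHom, Polynomial.eval_add, Polynomial.eval_mul,
      Polynomial.eval_C, Polynomial.eval_X, Polynomial.eval_pow, Polynomial.eval_sub,
      Polynomial.eval_one, one_pow, mul_one, sub_self, isCoprime_zero_right] at this
    exact this.ne_zero
  have h2 : a + -b + c ≠ 0 := by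
    have := hcop.map (Polynomial.evalRingHom (-1 : RatFunc ℚ))
    simp only [Polynomial.coe_evalRingHom, Polynomial.eval_add, Polynomial.eval_mul,
      Polynomial.eval_C, Polynomial.eval_X, Polynomial.eval_pow, Polynomial.eval_sub,
      Polynomial.eval_one, mul_neg, even_two.neg_pow, one_pow, mul_one, sub_self,
      isCoprime_zero_right] at this
    exact this.ne_zero
  have h3 : c + RatFunc.C 2 ≠ 0 := by
    intro h
    apply hc2'
    rw [map_neg]
    exact eq_neg_of_add_eq_zero_left h
  have h4 : c + RatFunc.C (-2) ≠ 0 := by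
    intro h
    apply hc2
    rw [map_neg] at h
    exact add_neg_eq_zero.1 h
  filter_upwards [evalRF_ne hc0, evalRF_ne h1, evalRF_ne h2, evalRF_ne h3, evalRF_ne h4,
    evalRF_add (a + b) c, evalRF_add a b, evalRF_add (a + -b) c, evalRF_add a (-b), evalRF_neg b,
    evalRF_add c (RatFunc.C 2), evalRF_add c (RatFunc.C (-2))]
    with n k0 k1 k2 k3 k4 e1 e2 e3 e4 e5 e6 e7
  rw [e1, e2] at k1
  rw [e3, e4, e5, ← sub_eq_add_neg] at k2
  rw [e6, evalRF_C] at k3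
  rw [e7, evalRF_C, ← sub_eq_add_neg] at k4
  exact ⟨k0, k3, k4, k1, k2⟩

open Filter in
theorem growth_of_step (h : ℕ → ℝ) (h0 : ∀ n, 0 ≤ h n) (n0 : ℕ)
    (hT : Tendsto (fun r => ∑ n ∈ Finset.Icc n0 r, h n) atTop atTop)
    (hst : ∀ F : ℝ, 1 < F → F < 2 → ∀ᶠ r : ℕ in atTop,
      F * ∑ n ∈ Finset.Icc n0 r, h n ≤ ∑ n ∈ Finset.Icc n0 (r + 1), h n) :
    ∃ r0 : ℕ, n0 ≤ r0 ∧ ∀ F : ℝ, 1 < F → F < 2 →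
      ∃ D : ℝ, 0 < D ∧ ∀ r : ℕ, r0 ≤ r → D * F ^ r ≤ ∑ n ∈ Finset.Icc r0 r, h n := by
  obtain ⟨r0, hr0, hpos⟩ : ∃ r0, n0 ≤ r0 ∧ 0 < h r0 := by
    by_contra hcon
    push Not at hcon
    obtain ⟨r, hr⟩ := (hT.eventually_gt_atTop 0).exists
    have : ∑ n ∈ Finset.Icc n0 r, h n ≤ 0 :=
      Finset.sum_nonpos fun n hn => hcon n (Finset.mem_Icc.1 hn).1
    linarith
  refine ⟨r0, hr0, ?_⟩
  intro F hF1 hF2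
  have hF0 : 0 < F := by linarith
  set H : ℕ → ℝ := fun r => ∑ n ∈ Finset.Icc n0 r, h n with hH
  obtain ⟨R, hR⟩ := eventually_atTop.1 ((hst F hF1 hF2).and (hT.eventually_gt_atTop (2 * H r0)))
  have hRpos : 0 < H R := by
    have := (hR R le_rfl).2
    have h2 : 0 ≤ H r0 := Finset.sum_nonneg fun n _ => h0 n
    linarith
  have hgrow : ∀ r, R ≤ r → H R / F ^ R * F ^ r ≤ H r := by
    intro r hr
    induction r, hr using Nat.le_induction with
    | base => rw [div_mul_cancel₀ _ (by positivity)]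
    | succ r hr ih =>
      have := (hR r hr).1
      calc H R / F ^ R * F ^ (r + 1) = F * (H R / F ^ R * F ^ r) := by ring
        _ ≤ F * H r := by gcongr
        _ ≤ _ := this
  have hsplit : ∀ r, H r ≤ H r0 + ∑ n ∈ Finset.Icc r0 r, h n := by
    intro r
    have hsub : Finset.Icc n0 r ⊆ Finset.Icc n0 r0 ∪ Finset.Icc r0 r := by
      intro n hn
      simp only [Finset.mem_union, Finset.mem_Icc] at *
      omega
    calc H r ≤ ∑ n ∈ Finset.Icc n0 r0 ∪ Finset.Icc r0 r, h n :=
          Finset.sum_le_sum_of_subset_of_nonneg hsub fun n _ _ => h0 n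
      _ ≤ _ := by
        have := Finset.sum_union_inter (s₁ := Finset.Icc n0 r0) (s₂ := Finset.Icc r0 r) (f := h)
        have h2 : 0 ≤ ∑ n ∈ Finset.Icc n0 r0 ∩ Finset.Icc r0 r, h n :=
          Finset.sum_nonneg fun n _ => h0 n
        simp only [hH]
        linarith
  refine ⟨min (H R / F ^ R / 2) (h r0 / F ^ R), by positivity, ?_⟩
  intro r hr
  have hFr : 0 < F ^ r := by positivity
  rcases le_total R r with hc | hc
  · have h1 := hgrow r hc
    have h2 := hsplit r
    have h3 := (hR r hc).2
    calc _ ≤ H R / F ^ R / 2 * F ^ r := by gcongr; exact min_le_left _ _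
      _ = (H R / F ^ R * F ^ r) / 2 := by ring
      _ ≤ _ := by simp only [hH] at *; linarith
  · calc _ ≤ h r0 / F ^ R * F ^ r := by gcongr; exact min_le_right _ _
      _ ≤ h r0 / F ^ R * F ^ R := by
        gcongr
        exact hF1.le
      _ = h r0 := div_mul_cancel₀ _ (by positivity)
      _ ≤ _ := Finset.single_le_sum (fun n _ => h0 n) (Finset.mem_Icc.2 ⟨le_rfl, hr⟩)

open Filter in
theorem main_step (h M : ℕ → ℝ) (h0 : ∀ n, 0 ≤ h n) (hM : ∀ n, 1 ≤ M n) (n0 N : ℕ) (hN : n0 ≤ N)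
    (hadm : (fun r : ℕ => ∑ n ∈ Finset.Icc n0 r, M n) =o[atTop]
      (fun r : ℕ => ∑ n ∈ Finset.Icc n0 r, h n))
    (hg : ∀ k, 2 * ∑ i ∈ Finset.range k, h (N + (i + 3)) ≤
      ∑ i ∈ Finset.range (k + 2), h (N + (i + 2)) +
        2072 * ∑ i ∈ Finset.range (k + 2), M (N + (i + 1))) :
    ∃ r0 : ℕ, n0 ≤ r0 ∧ ∀ F : ℝ, 1 < F → F < 2 →
      ∃ D : ℝ, 0 < D ∧ ∀ r : ℕ, r0 ≤ r → D * F ^ r ≤ ∑ n ∈ Finset.Icc r0 r, h n := by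
  set H : ℕ → ℝ := fun r => ∑ n ∈ Finset.Icc n0 r, h n with hH
  set T : ℕ → ℝ := fun r => ∑ n ∈ Finset.Icc n0 r, M n with hTd
  have hH0 : ∀ r, 0 ≤ H r := fun r => Finset.sum_nonneg fun n _ => h0 n
  have hT0 : ∀ r, 0 ≤ T r := fun r => Finset.sum_nonneg fun n _ => by linarith [hM n]
  have hTt : Tendsto T atTop atTop := by
    apply tendsto_atTop_mono (f := fun r : ℕ => (r : ℝ) - n0)
    · intro r
      have h1 : ∑ n ∈ Finset.Icc n0 r, (1 : ℝ) ≤ T r := Finset.sum_le_sum fun n _ => hM n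
      simp only [Finset.sum_const, Nat.card_Icc, nsmul_eq_mul, mul_one] at h1
      have : (r : ℝ) ≤ ((r + 1 - n0 : ℕ) : ℝ) + n0 := by
        exact_mod_cast (by omega : r ≤ r + 1 - n0 + n0)
      linarith
    · exact tendsto_atTop_add_const_right _ _ tendsto_natCast_atTop_atTop
  have hbd : ∀ ε : ℝ, 0 < ε → ∀ᶠ r in atTop, T r ≤ ε * H r := by
    intro ε hε
    filter_upwards [hadm.bound hε] with r hr
    rwa [Real.norm_of_nonneg (hT0 r), Real.norm_of_nonneg (hH0 r)] at hr
  have hHt : Tendsto H atTop atTop := by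
    apply tendsto_atTop_mono' atTop _ hTt
    filter_upwards [hbd 1 one_pos] with r hr
    linarith
  -- converting sums
  have cv : ∀ (f : ℕ → ℝ) (A k : ℕ), n0 ≤ A →
      ∑ n ∈ Finset.Icc n0 A, f n + ∑ i ∈ Finset.range k, f (A + (i + 1)) =
        ∑ n ∈ Finset.Icc n0 (A + k), f n := by
    intro f A k hA
    induction k with
    | zero => simp
    | succ k ih =>
      rw [Finset.sum_range_succ, ← add_assoc, ih, ← add_assoc,
        Finset.sum_Icc_succ_top (by omega)]
  have key : ∀ k, 2 * H (N + 2 + k) ≤ H (N + 2 + k + 1) + 2 * H (N + 2) + 2072 * T (N + 2 + k) := by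
    intro k
    have h1 := cv h (N + 2) k (by omega)
    have h2 := cv h (N + 1) (k + 2) (by omega)
    have h3 := cv M N (k + 2) hN
    have h4 := hg k
    simp only [show ∀ i, N + 2 + (i + 1) = N + (i + 3) by intro i; ring,
      show ∀ i, N + 1 + (i + 1) = N + (i + 2) by intro i; ring,
      show N + (k + 2) = N + 2 + k by ring] at h1 h2 h3
    rw [show N + (k + 1 + 2) = N + 2 + k + 1 by ring] at h2
    have h5 := hH0 (N + 1)
    have h6 := hT0 N
    simp only [hH, hTd] at *
    linarith
  apply growth_of_step h h0 n0 hHt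
  intro F hF1 hF2
  filter_upwards [hbd ((2 - F) / 2073) (by linarith [hF2] |> fun h => div_pos h (by norm_num)),
    hTt.eventually_ge_atTop (2 * H (N + 2)), eventually_ge_atTop (N + 2)] with r h1 h2 h3
  obtain ⟨k, rfl⟩ := Nat.exists_eq_add_of_le h3
  have := key k
  change F * H _ ≤ H _
  linarith

/-- Theorem 3: if `c_n` is not identically `0`, `2` or `-2` and the right
side has degree two, then the summed logarithmic height of an admissible solution grows
at least like `F^r` for every `1 < F < 2`. -/
theorem exponential_height_growth (a b c : RatFunc ℚ)
    (hc0 : c ≠ 0) (hc2 : c ≠ RatFunc.C 2) (hc2' : c ≠ RatFunc.C (-2))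
    (hcop : IsCoprime
      (Polynomial.C a + Polynomial.C b * Polynomial.X + Polynomial.C c * Polynomial.X ^ 2)
      (1 - Polynomial.X ^ 2 : Polynomial (RatFunc ℚ)))
    (hdeg : max
      (Polynomial.C a + Polynomial.C b * Polynomial.X +
        Polynomial.C c * Polynomial.X ^ 2 : Polynomial (RatFunc ℚ)).natDegree
      (1 - Polynomial.X ^ 2 : Polynomial (RatFunc ℚ)).natDegree = 2)
    (n0 : ℕ) (y : ℕ → ℚ)
    (hy : ∀ n : ℕ, n0 ≤ n → y n ≠ 1 ∧ y n ≠ -1)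
    (heq : ∀ n : ℕ, n0 < n →
      y (n + 1) + y (n - 1) =
        (evalRF a n + evalRF b n * y n + evalRF c n * y n ^ 2) / (1 - y n ^ 2))
    (hadm : (fun r : ℕ => ∑ n ∈ Finset.Icc n0 r,
        max 1 (max (ratHeight (evalRF a n))
          (max (ratHeight (evalRF b n)) (ratHeight (evalRF c n)))))
      =o[Filter.atTop]
      (fun r : ℕ => ∑ n ∈ Finset.Icc n0 r, ratHeight (y n))) :
    ∃ r0 : ℕ, n0 ≤ r0 ∧ ∀ F : ℝ, 1 < F → F < 2 →
      ∃ D : ℝ, 0 < D ∧ ∀ r : ℕ, r0 ≤ r →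
        D * F ^ r ≤ ∑ n ∈ Finset.Icc r0 r, ratHeight (y n) := by
  obtain ⟨N1, hN1⟩ := Filter.eventually_atTop.1 (eventually_NZ hc0 hc2 hc2' hcop)
  have hN : n0 ≤ max n0 N1 := le_max_left _ _
  refine main_step (fun n => ratHeight (y n))
    (fun n => max 1 (max (ratHeight (evalRF a n))
          (max (ratHeight (evalRF b n)) (ratHeight (evalRF c n)))))
    (fun n => ratHeight_nonneg _) (fun n => le_max_left _ _) n0 (max n0 N1) hN hadm ?_
  intro k
  refine global_sum (fun i => y (max n0 N1 + i)) (fun i => evalRF a (max n0 N1 + (i + 1)))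
    (fun i => evalRF b (max n0 N1 + (i + 1))) (fun i => evalRF c (max n0 N1 + (i + 1)))
    (fun i => hN1 _ ((le_max_right n0 N1).trans (Nat.le_add_right _ _)))
    (fun i => hy _ (hN.trans (Nat.le_add_right _ _))) ?_ k
  intro i
  exact heq (max n0 N1 + (i + 1)) (by omega)
end

section
/- Let (y_n)_{n=k-1}^{k+3} \subset \mathbb{Q}\setminus\{-1,1\} satisfy y_{n+1} + y_{n-1} = (a_n + b_n y_n)/(1 - y_n^2), where k is sufficiently large (all quantities in the definition of \epsilon_k are finite and nonzero) and the right-hand side is irreducible. Fix an absolute value |\cdot|_p (p \le \infty) and \theta = 1 or -1, and assume |y_{k-1}|_p \le |1 - \theta y_k|_p^{-1/2}. Then for all sufficiently small \delta > 0, if |1 - \theta y_k|_p < \epsilon_k (with \epsilon_k defined using this \delta), then the quantity A_k := y_{k+1} - (a_k + \theta b_k)/(2(1 - \theta y_k)) satisfies |A_k|_p \le |1 - \theta y_k|_p^{-1/2} if p < \infty, and |A_k|_\infty \le (11/10)\,|1 - \theta y_k|_\infty^{-1/2} if p = \infty. -/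
/-- The quantity `ε_n^{-δ}/κ_p`: the maximum over the finite collection of values of
the absolute value `v` of the coefficient combinations entering the definition of the
length scale `ε_n` (equation (eps2) of the paper). -/
noncomputable def epsMax2 (v : ℚ → ℝ) (a b : ℤ → ℚ) (n : ℤ) : ℝ :=
  List.foldr max 0
    [(v 2)⁻¹,
     v (1/2) * v (a n + b n), v (1/2) * v (a n - b n),
     (v (1/2))⁻¹ * (v (a n + b n))⁻¹, (v (1/2))⁻¹ * (v (a n - b n))⁻¹,
     v (a (n + 1)), v (b (n + 1)), v (a (n - 1)), v (b (n - 1)),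
     v (1/2) * v (a (n + 2) + b (n + 2)), v (1/2) * v (a (n + 2) - b (n + 2)),
     v (1/2) * v (a (n - 2) + b (n - 2)), v (1/2) * v (a (n - 2) - b (n - 2)),
     v (a n + b n - 2 * b (n + 1)), v (-a n + b n - 2 * b (n + 1)),
     v (a n + b n - 2 * b (n - 1)), v (-a n + b n - 2 * b (n - 1)),
     (v (a n + b n - 2 * b (n + 1)))⁻¹, (v (-a n + b n - 2 * b (n + 1)))⁻¹,
     (v (a n + b n - 2 * b (n - 1)))⁻¹, (v (-a n + b n - 2 * b (n - 1)))⁻¹,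
     v (a n + b n), v (a n - b n), (v (a n + b n))⁻¹, (v (a n - b n))⁻¹,
     (v (1/2))⁻¹ * (v (a n - b n - (a (n - 2) + b (n - 2) - 2 * b (n - 1))))⁻¹,
     (v (1/2))⁻¹ * (v (a n + b n + (-a (n - 2) + b (n - 2) - 2 * b (n - 1))))⁻¹]

/-- All coefficient combinations entering the definition of `ε_n` are nonzero
(the "k sufficiently large" condition). -/
def EpsNonzero (a b : ℤ → ℚ) (n : ℤ) : Prop :=
  a n + b n ≠ 0 ∧ a n - b n ≠ 0 ∧
  a n + b n - 2 * b (n + 1) ≠ 0 ∧ -a n + b n - 2 * b (n + 1) ≠ 0 ∧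
  a n + b n - 2 * b (n - 1) ≠ 0 ∧ -a n + b n - 2 * b (n - 1) ≠ 0 ∧
  a n - b n - (a (n - 2) + b (n - 2) - 2 * b (n - 1)) ≠ 0 ∧
  a n + b n + (-a (n - 2) + b (n - 2) - 2 * b (n - 1)) ≠ 0

theorem Ak_identity (θ a b y ym yp : ℚ) (hθ : θ = 1 ∨ θ = -1) (h1 : y ≠ 1) (h2 : y ≠ -1)
    (h : yp + ym = (a + b * y) / (1 - y ^ 2)) :
    yp - (a + θ * b) / (2 * (1 - θ * y)) =
      -ym + (1/2) * (a - θ * b) / (2 - (1 - θ * y)) := by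
  have e1 : 1 - y ≠ 0 := fun h => h1 (by linarith)
  have e2 : 1 + y ≠ 0 := fun h => h2 (by linarith)
  have e3 : 1 - y ^ 2 = (1 - y) * (1 + y) := by ring
  have hp : yp = (a + b * y) / ((1 - y) * (1 + y)) - ym := by rw [← e3, ← h]; ring
  rcases hθ with rfl | rfl
  · have e4 : 2 - (1 - 1 * y) = 1 + y := by ring
    have e5 : 1 - 1 * y = 1 - y := by ring
    rw [hp, e4, e5]; field_simp; ring
  · have e4 : 2 - (1 - (-1) * y) = 1 - y := by ring
    have e5 : 1 - (-1) * y = 1 + y := by ring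
    rw [hp, e4, e5]; field_simp; ring

theorem Ak_rpow_le {u ε δ c : ℝ} (hu : 0 < u) (hue : u < ε) (hδ : 0 < δ) (hε : ε ≤ 1)
    (hc : δ ≤ c) : ε ^ (-δ) ≤ u ^ (-c) :=
  (Real.rpow_le_rpow_of_nonpos hu hue.le (by linarith)).trans
    (Real.rpow_le_rpow_of_exponent_ge hu (hue.le.trans hε) (by linarith))

theorem Ak_eps_le {ε δ : ℝ} (hε : 0 < ε) (hδ : 0 < δ) (h : 1 ≤ ε ^ (-δ)) : ε ≤ 1 := by
  by_contra hc
  have := Real.rpow_lt_one_of_one_lt_of_neg (not_le.mp hc) (show -δ < 0 by linarith)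
  linarith

theorem epsMax2_two (v : ℚ → ℝ) (a b : ℤ → ℚ) (n : ℤ) : (v 2)⁻¹ ≤ epsMax2 v a b n := by
  unfold epsMax2
  exact le_max_left _ _

theorem epsMax2_ab (v : ℚ → ℝ) (a b : ℤ → ℚ) (n : ℤ) (θ : ℚ) (hθ : θ = 1 ∨ θ = -1) :
    v (1/2) * v (a n - θ * b n) ≤ epsMax2 v a b n := by
  unfold epsMax2
  simp only [List.foldr]
  rcases hθ with rfl | rfl
  · rw [one_mul]
    exact le_max_of_le_right (le_max_of_le_right (le_max_left _ _))
  · rw [show a n - -1 * b n = a n + b n by ring]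
    exact le_max_of_le_right (le_max_left _ _)

/-- Theorem 2 (i): estimate for
`A_k = y_{k+1} - (a_k + θ b_k)/(2(1 - θ y_k))`. -/
theorem singular_confinement_Ak (v : ℚ → ℝ) (κ : ℝ)
    (hv : ((∃ p : ℕ, p.Prime ∧ ∀ x : ℚ, v x = ((padicNorm p x : ℚ) : ℝ)) ∧ κ = 1) ∨
          ((∀ x : ℚ, v x = |(x : ℝ)|) ∧ κ = 10))
    (a b y : ℤ → ℚ) (k : ℤ)
    (hy : ∀ n : ℤ, k - 1 ≤ n → n ≤ k + 3 → y n ≠ 1 ∧ y n ≠ -1)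
    (heq : ∀ n : ℤ, k ≤ n → n ≤ k + 2 →
      y (n + 1) + y (n - 1) = (a n + b n * y n) / (1 - y n ^ 2))
    (hirr : ∀ n : ℤ, k - 2 ≤ n → n ≤ k + 2 → a n + b n ≠ 0 ∧ a n - b n ≠ 0)
    (hnz : EpsNonzero a b k)
    (θ : ℚ) (hθ : θ = 1 ∨ θ = -1)
    (hkm : v (y (k - 1)) ≤ v (1 - θ * y k) ^ (-(1/2) : ℝ)) :
    ∃ δ0 : ℝ, 0 < δ0 ∧ ∀ δ : ℝ, 0 < δ → δ < δ0 → ∀ ε : ℝ, 0 < ε →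
      ε ^ (-δ) = κ * epsMax2 v a b k →
      v (1 - θ * y k) < ε →
      (((∃ p : ℕ, p.Prime ∧ ∀ x : ℚ, v x = ((padicNorm p x : ℚ) : ℝ)) →
          v (y (k + 1) - (a k + θ * b k) / (2 * (1 - θ * y k)))
            ≤ v (1 - θ * y k) ^ (-(1/2) : ℝ)) ∧
       ((∀ x : ℚ, v x = |(x : ℝ)|) →
          v (y (k + 1) - (a k + θ * b k) / (2 * (1 - θ * y k)))
            ≤ 11/10 * v (1 - θ * y k) ^ (-(1/2) : ℝ))) := by
  have hyk := hy k (by omega) (by omega)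
  have hid := Ak_identity θ (a k) (b k) (y k) (y (k-1)) (y (k+1)) hθ hyk.1 hyk.2
    (heq k le_rfl (by omega))
  have hu0 : 1 - θ * y k ≠ 0 := by
    rcases hθ with rfl | rfl
    · intro h; exact hyk.1 (by linarith)
    · intro h; exact hyk.2 (by linarith)
  refine ⟨1/4, by norm_num, fun δ hδ hδ4 ε hε hM hlt => ?_⟩
  have m1 := epsMax2_two v a b k
  have m2 := epsMax2_ab v a b k θ hθ
  rw [hid]
  generalize 1 - θ * y k = u at *
  generalize epsMax2 v a b k = M at *
  generalize a k - θ * b k = c at *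
  generalize y (k - 1) = z at *
  rcases hv with ⟨⟨p, hp, hv⟩, rfl⟩ | ⟨hv, rfl⟩
  · haveI : Fact p.Prime := ⟨hp⟩
    have v2 : v 2 ≤ 1 := by
      rw [hv]; exact_mod_cast padicNorm.of_int (p := p) 2
    constructor
    swap
    · intro h; rw [h] at v2; norm_num at v2
    intro _
    have vmul : ∀ x w, v (x * w) = v x * v w := by
      intro x w; simp [hv, padicNorm.mul]
    have vdiv : ∀ x w, v (x / w) = v x / v w := by
      intro x w; simp [hv, padicNorm.div]
    have vpos : ∀ x, x ≠ 0 → 0 < v x := by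
      intro x hx; rw [hv]
      exact_mod_cast lt_of_le_of_ne (padicNorm.nonneg x) (padicNorm.nonzero hx).symm
    have vna : ∀ x w, v (x + w) ≤ max (v x) (v w) := by
      intro x w; simp only [hv]; exact_mod_cast padicNorm.nonarchimedean
    have vneg : ∀ x, v (-x) = v x := by
      intro x; simp [hv]
    have hup := vpos u hu0
    have h2p := vpos 2 (by norm_num)
    rw [one_mul] at hM
    have hM1 : 1 ≤ M := le_trans ((one_le_inv₀ h2p).2 v2) m1
    have hε1 := Ak_eps_le hε hδ (hM ▸ hM1)
    have h2M : M⁻¹ ≤ v 2 := inv_le_of_inv_le₀ h2p m1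
    have hεM : ε ≤ M⁻¹ := by
      rw [← hM, Real.rpow_neg hε.le, inv_inv]
      calc ε = ε ^ (1:ℝ) := (Real.rpow_one ε).symm
        _ ≤ ε ^ δ := Real.rpow_le_rpow_of_exponent_ge hε hε1 (by linarith)
    have hu2 : v u < v 2 := by linarith
    have h2u : v 2 ≤ v (2 - u) := by
      have := vna (2 - u) u
      rw [sub_add_cancel] at this
      rcases le_max_iff.1 this with h | h
      · exact h
      · linarith
    refine (vna _ _).trans (max_le (by rw [vneg]; exact hkm) ?_)
    rw [vdiv, vmul]
    calc v (1/2) * v c / v (2 - u) ≤ M / v 2 := by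
          apply div_le_div₀ (by linarith) m2 h2p h2u
      _ = M * (v 2)⁻¹ := div_eq_mul_inv _ _
      _ ≤ M * M := by gcongr
      _ ≤ v u ^ (-(1/4) : ℝ) * v u ^ (-(1/4) : ℝ) := by
          have := Ak_rpow_le hup hlt hδ hε1 hδ4.le
          rw [hM] at this
          exact mul_le_mul this this (by linarith) (by linarith)
      _ = v u ^ (-(1/2) : ℝ) := by
          rw [← Real.rpow_add hup]; norm_num
  · constructor
    · rintro ⟨p, hp, h⟩
      exfalso
      haveI : Fact p.Prime := ⟨hp⟩
      have v2 : v 2 ≤ 1 := by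
        rw [h]; exact_mod_cast padicNorm.of_int (p := p) 2
      rw [hv] at v2; norm_num at v2
    intro _
    have hup : 0 < v u := by rw [hv]; exact abs_pos.2 (by exact_mod_cast hu0)
    have hM1 : 1/2 ≤ M := by rw [hv] at m1; norm_num at m1; linarith
    have hε1 := Ak_eps_le hε hδ (by rw [hM]; linarith)
    have hu1 : v u < 1 := by linarith
    have key := Ak_rpow_le hup hlt hδ hε1 (show δ ≤ 1/2 by linarith)
    rw [hM] at key
    have h2u : 1 ≤ v (2 - u) := by
      rw [hv] at hu1 ⊢
      push_cast
      have := abs_lt.1 hu1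
      rw [abs_of_pos] <;> linarith
    have hT : v (1/2 * c / (2 - u)) ≤ M := by
      have : v (1/2 * c / (2 - u)) = v (1/2) * v c / v (2 - u) := by
        simp only [hv]; push_cast; rw [abs_div, abs_mul]
      rw [this]
      exact (div_le_self (by simp only [hv]; positivity) h2u).trans m2
    have htri : v (-z + 1/2 * c / (2 - u)) ≤ v z + v (1/2 * c / (2 - u)) := by
      simp only [hv]
      rw [← abs_neg (z : ℝ), ← Rat.cast_neg, Rat.cast_add]
      exact abs_add_le _ _
    linarith
end

section
/- Let \theta = 1 or -1, and let (y_n)_{n > K} \subset \mathbb{Q}\setminus\{-1,1\} be a solution of y_{n+1} + y_{n-1} = (a_n + b_n y_n)/(1 - y_n^2) with a_n, b_n \in \mathbb{Q} for each n. Define f_n = (1 - \theta y_n) y_{n+1} - y_n. If b_n - 2 - \theta f_n - \theta f_{n-1} = 0 for all n > K, then for all n > K: f_n - f_{n-1} - a_n = 0, f_n = (\theta a_n + b_n - 2)/(2\theta), and y_n solves the discrete Riccati equation y_{n+1} = (\tfrac12(a_n + \theta b_n - 2\theta) + y_n)/(1 - \theta y_n). -/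
/-- if `b_n - 2 - θ f_n - θ f_{n-1} ≡ 0` along the solution, then
`f_n - f_{n-1} - a_n = 0`, `f_n = (θ a_n + b_n - 2)/(2θ)`, and `y_n` solves the
discrete Riccati equation, where `f_n = (1 - θ y_n) y_{n+1} - y_n`. -/
theorem riccati_from_vanishing_coefficient
    (θ : ℚ) (hθ : θ = 1 ∨ θ = -1) (K : ℤ) (a b y : ℤ → ℚ)
    (hy : ∀ n : ℤ, K < n → y n ≠ 1 ∧ y n ≠ -1)
    (heq : ∀ n : ℤ, K < n →
      y (n + 1) + y (n - 1) = (a n + b n * y n) / (1 - y n ^ 2))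
    (hb : ∀ n : ℤ, K < n →
      b n - 2 - θ * ((1 - θ * y n) * y (n + 1) - y n)
        - θ * ((1 - θ * y (n - 1)) * y n - y (n - 1)) = 0) :
    ∀ n : ℤ, K < n →
      ((1 - θ * y n) * y (n + 1) - y n) - ((1 - θ * y (n - 1)) * y n - y (n - 1)) - a n = 0 ∧
      (1 - θ * y n) * y (n + 1) - y n = (θ * a n + b n - 2) / (2 * θ) ∧
      y (n + 1) = ((a n + θ * b n - 2 * θ) / 2 + y n) / (1 - θ * y n) := by
  intro n hn
  obtain ⟨h1, h2⟩ := hy n hn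
  have e := heq n hn
  have hB := hb n hn
  have m1 : 1 - y n ≠ 0 := fun h => h1 (by linarith)
  have m2 : 1 + y n ≠ 0 := fun h => h2 (by linarith)
  have hd : 1 - y n ^ 2 ≠ 0 := by
    have : 1 - y n ^ 2 = (1 - y n) * (1 + y n) := by ring
    rw [this]
    exact mul_ne_zero m1 m2
  rw [eq_div_iff hd] at e
  generalize y (n + 1) = Y at *
  generalize y (n - 1) = x at *
  generalize y n = z at *
  rcases hθ with rfl | rfl
  · have k : ((1 - 1 * z) * Y - z) - ((1 - 1 * x) * z - x) - a n = 0 := by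
      linear_combination e + z * hB
    have m : (1 - 1 * z) ≠ 0 := by simpa using m1
    refine ⟨k, by rw [eq_div_iff (by norm_num)]; linarith, ?_⟩
    rw [eq_div_iff m]
    linarith
  · have k : ((1 - (-1) * z) * Y - z) - ((1 - (-1) * x) * z - x) - a n = 0 := by
      linear_combination e + z * hB
    have m : (1 - (-1) * z) ≠ 0 := by
      intro h
      exact m2 (by linarith)
    refine ⟨k, by rw [eq_div_iff (by norm_num)]; linarith, ?_⟩
    rw [eq_div_iff m]
    linarith
end

section
/- Let (h_r)_{r \ge r_0} be a non-decreasing sequence of positive real numbers and let \tau < 2 and (e_r) be a sequence of real numbers with e_r = o(h_{r+1}) as r \to \infty. Suppose h_r \le (\tau/2) h_{r+1} + e_r for all r \ge r_0. Then for every F with 1 < F < 2/\tau there exist a constant D > 0 and an integer r_1 such that h_r \ge D\,F^r for all r \ge r_1; in particular h_r grows exponentially in r. -/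
/-- if a non-decreasing positive sequence satisfies
`h_r ≤ (τ/2) h_{r+1} + e_r` with `τ < 2` and `e_r = o(h_{r+1})`, then `h_r` grows
at least like `F^r` for every `1 < F < 2/τ`. -/
theorem exponential_growth_of_height
    (r0 : ℕ) (h : ℕ → ℝ)
    (hpos : ∀ r, r0 ≤ r → 0 < h r)
    (hmono : ∀ r, r0 ≤ r → h r ≤ h (r + 1))
    (τ : ℝ) (hτ : τ < 2) (e : ℕ → ℝ)
    (he : Filter.Tendsto (fun r : ℕ => e r / h (r + 1)) Filter.atTop (nhds 0))
    (hineq : ∀ r, r0 ≤ r → h r ≤ τ / 2 * h (r + 1) + e r) :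
    ∀ F : ℝ, 1 < F → F < 2 / τ →
      ∃ D : ℝ, 0 < D ∧ ∃ r1 : ℕ, ∀ r, r1 ≤ r → D * F ^ r ≤ h r := by
  intro F hF1 hF2
  have hF0 : 0 < F := by linarith
  have hτ0 : 0 < τ := by
    by_contra hc
    have : 2 / τ ≤ 0 := div_nonpos_of_nonneg_of_nonpos (by norm_num) (not_lt.mp hc)
    linarith
  have hgap : 0 < 1 / F - τ / 2 := by
    rw [lt_div_iff₀ hτ0] at hF2
    rw [sub_pos, lt_div_iff₀ hF0]
    linarith
  obtain ⟨N, hN⟩ := Filter.eventually_atTop.mp (he.eventually (gt_mem_nhds hgap))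
  have hstep : ∀ r, max N r0 ≤ r → F * h r ≤ h (r + 1) := by
    intro r hr
    have hr0 : r0 ≤ r := le_trans (le_max_right _ _) hr
    have h1 := hN r (le_trans (le_max_left _ _) hr)
    have hp := hpos (r + 1) (by omega)
    rw [div_lt_iff₀ hp] at h1
    have h2 := hineq r hr0
    have h3 : h r ≤ 1 / F * h (r + 1) := by linarith
    calc F * h r ≤ F * (1 / F * h (r + 1)) := by gcongr
      _ = h (r + 1) := by field_simp
  refine ⟨h (max N r0) / F ^ (max N r0),
    div_pos (hpos _ (le_max_right _ _)) (by positivity), max N r0, ?_⟩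
  intro r hr
  induction r, hr using Nat.le_induction with
  | base =>
    have : F ^ (max N r0) ≠ 0 := by positivity
    rw [div_mul_cancel₀ _ this]
  | succ r hr ih =>
    have h1 := hstep r hr
    have h2 := mul_le_mul_of_nonneg_left ih hF0.le
    rw [pow_succ]
    linarith
end
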